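/- Let S = ⟨n₁,n₂,n₃,n₄⟩ be an almost symmetric numerical semigroup and f ∈ PF(S) \ {F(S)}. Then |Γ_f| + |Γ_{F(S)-f}| ≥ 4, where for g ∈ PF(S) \ {F(S)}, Γ_g is the set of pairs (i,j), i ≠ j, such that λ_{ij}·n_j - n_i = g, with λ_{ij} = max{K ∈ ℕ : K·n_j - n_i ∉ S}. -/

import Mathlib

/-- The numerical semigroup generated by `n`, viewed inside `ℤ`. -/
def NS {e : ℕ} (n : Fin e → ℕ) : Set ℤ :=
  {x | ∃ a : Fin e → ℕ, x = ∑ j, (a j : ℤ) * n j}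

/-- Pseudo-Frobenius numbers of the numerical semigroup generated by `n`. -/
def PF {e : ℕ} (n : Fin e → ℕ) : Set ℤ :=
  {x | x ∉ NS n ∧ ∀ i, x + (n i : ℤ) ∈ NS n}

/-- `F` is the Frobenius number: the maximum of `ℤ \ S`. -/
def IsFrob {e : ℕ} (n : Fin e → ℕ) (F : ℤ) : Prop :=
  F ∉ NS n ∧ ∀ x : ℤ, F < x → x ∈ NS n

/-- Almost symmetry with respect to the Frobenius number `F`. -/
def AlmostSym {e : ℕ} (n : Fin e → ℕ) (F : ℤ) : Prop :=
  ∀ x : ℤ, x ∉ NS n → F - x ∉ NS n → (x ∈ PF n ∧ F - x ∈ PF n)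

/-- `A` is an RF-matrix for `f`. -/
def IsRF {e : ℕ} (n : Fin e → ℕ) (f : ℤ) (A : Matrix (Fin e) (Fin e) ℤ) : Prop :=
  (∀ i, A i i = -1) ∧ (∀ i j, i ≠ j → 0 ≤ A i j) ∧
    (∀ i, ∑ j, A i j * (n j : ℤ) = f)

/-- `K = λ_{ij} = max {K ∈ ℕ : K·n_j - n_i ∉ S}`. -/
def IsLam {e : ℕ} (n : Fin e → ℕ) (i j : Fin e) (K : ℕ) : Prop :=
  ((K : ℤ) * n j - n i ∉ NS n) ∧
    ∀ L : ℕ, ((L : ℤ) * n j - n i ∉ NS n) → L ≤ K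

/-- `n` is a minimal generating system. -/
def MinGen {e : ℕ} (n : Fin e → ℕ) : Prop :=
  ∀ i, ¬ ∃ a : Fin e → ℕ, a i = 0 ∧ (n i : ℤ) = ∑ j, (a j : ℤ) * n j

/-- The set `Γ_g` of pairs `(i,j)`, `i ≠ j`, with `M_{ij} = λ_{ij}·n_j - n_i = g`. -/
def Gam (n : Fin 4 → ℕ) (g : ℤ) : Set (Fin 4 × Fin 4) :=
  {p | p.1 ≠ p.2 ∧ ∃ K : ℕ, IsLam n p.1 p.2 K ∧ (K : ℤ) * n p.2 - n p.1 = g}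

/-!
Suppose `f` and `g` are positive pseudo-Frobenius numbers with `f + g ∉ S`, and let `A` and `B` be
RF-matrices for `f` and `g`. If `0 < A i j` and `0 < B j i`, then `f + n i - n j` and
`g + n j - n i` both lie in `S`, and so does their sum `f + g`. Hence the positive entries of `A`
and of the transpose of `B` occupy disjoint off-diagonal positions, and there are at most `e² - e`
of them. On the other hand every row has a positive entry, and a row with a single one says
`f = K n_j - n_i`, which forces `K = λ_{ij}`, so that the row contributes a pair to `Γ`. The `2e`
rows together therefore give `4e ≤ (e² - e) + |Γ_f| + |Γ_g|`. Almost symmetry makes `g = F - f`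
a pseudo-Frobenius number.
-/

/-- The set `Γ_g` for any number `e` of generators; `Gam` is the case `e = 4`. -/
def Gamma {e : ℕ} (n : Fin e → ℕ) (g : ℤ) : Set (Fin e × Fin e) :=
  {p | p.1 ≠ p.2 ∧ ∃ K : ℕ, IsLam n p.1 p.2 K ∧ (K : ℤ) * n p.2 - n p.1 = g}

/-- The positions of the positive entries of an integer matrix. For an RF-matrix these are the
nonzero entries off the diagonal. -/
def posEntries {e : ℕ} (A : Matrix (Fin e) (Fin e) ℤ) : Finset (Fin e × Fin e) :=
  {p | 0 < A p.1 p.2}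

section

open Finset

variable {e : ℕ} {n : Fin e → ℕ} {f g F x y : ℤ} {i j : Fin e} {A B : Matrix (Fin e) (Fin e) ℤ}

theorem NS_eq_span (n : Fin e → ℕ) :
    NS n = Submodule.span ℕ (Set.range fun i => (n i : ℤ)) := by
  ext x
  simp [NS, Submodule.mem_span_range_iff_exists_fun, eq_comm]

theorem zero_mem_NS (n : Fin e → ℕ) : (0 : ℤ) ∈ NS n := by
  rw [NS_eq_span]
  exact zero_mem _

theorem add_mem_NS (hx : x ∈ NS n) (hy : y ∈ NS n) : x + y ∈ NS n := by
  rw [NS_eq_span] at *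
  exact add_mem hx hy

theorem natCast_mul_mem_NS (n : Fin e → ℕ) (K : ℕ) (i : Fin e) : (K : ℤ) * n i ∈ NS n := by
  rw [NS_eq_span, ← nsmul_eq_mul]
  exact nsmul_mem (Submodule.subset_span (Set.mem_range_self i)) K

theorem sum_mul_mem_NS {c : Fin e → ℤ} (hc : ∀ k, 0 ≤ c k) : ∑ k, c k * n k ∈ NS n :=
  ⟨fun k => (c k).toNat, by simp [hc]⟩

theorem sum_mul_sub_mem_NS {c : Fin e → ℤ} (hc : ∀ k, 0 ≤ c k) (hj : 0 < c j) :
    ∑ k, c k * n k - n j ∈ NS n := by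
  have hnonneg (k : Fin e) : 0 ≤ (c - Pi.single j 1 : Fin e → ℤ) k := by
    obtain rfl | hkj := eq_or_ne k j
    · simpa [Order.one_le_iff_pos] using hj
    · simpa [hkj] using hc k
  simpa [sub_mul, Pi.single_apply] using sum_mul_mem_NS (n := n) hnonneg

theorem exists_sub_mem_NS (hx : x ∈ NS n) (hx₀ : x ≠ 0) : ∃ j, x - n j ∈ NS n := by
  obtain ⟨a, rfl⟩ := hx
  obtain ⟨j, -, hj⟩ := exists_ne_zero_of_sum_ne_zero hx₀
  have haj : a j ≠ 0 := fun h => hj (by simp [h])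
  exact ⟨j, sum_mul_sub_mem_NS (fun k => Int.natCast_nonneg (a k)) (by positivity)⟩

theorem add_mem_NS_of_mem_PF (hf : f ∈ PF n) (hx : x ∈ NS n) (hx₀ : x ≠ 0) : f + x ∈ NS n := by
  obtain ⟨j, hj⟩ := exists_sub_mem_NS hx hx₀
  convert add_mem_NS (hf.2 j) hj using 1
  ring

theorem IsFrob.pos (hF : IsFrob n F) (hf : f ∉ NS n) (hFf : F - f ∉ NS n) : 0 < f := by
  have hf₀ : f ≠ 0 := fun h => hf (h ▸ zero_mem_NS n)
  have hle : F - f ≤ F := not_lt.mp fun h => hFf (hF.2 _ h)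
  omega

theorem AlmostSym.sub_mem_PF (hAS : AlmostSym n F) (hF : IsFrob n F) (hf : f ∈ PF n)
    (hfF : f ≠ F) : F - f ∈ PF n := by
  refine (hAS f hf.1 fun hmem => hF.1 ?_).2
  simpa using add_mem_NS_of_mem_PF hf hmem (sub_ne_zero.mpr hfF.symm)

theorem isLam_of_mem_PF {K : ℕ} (h : (K : ℤ) * n j - n i ∈ PF n) : IsLam n i j K := by
  refine ⟨h.1, fun L hL => not_lt.mp fun hKL => hL ?_⟩
  obtain ⟨d, rfl⟩ := Nat.exists_eq_add_of_lt hKL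
  convert add_mem_NS (h.2 j) (natCast_mul_mem_NS n d j) using 1
  push_cast
  ring

theorem exists_isRF (hf : f ∈ PF n) : ∃ A, IsRF n f A := by
  choose a ha using hf.2
  have hdiag (i : Fin e) : a i i = 0 := by
    by_contra hi
    refine hf.1 ?_
    have := sum_mul_sub_mem_NS (n := n) (fun k => Int.natCast_nonneg (a i k))
      (Int.natCast_pos.mpr (Nat.pos_of_ne_zero hi))
    rwa [← ha, add_sub_cancel_right] at this
  refine ⟨fun i j => a i j - if j = i then 1 else 0, fun i => by simp [hdiag],
    fun i j hij => by simp [hij.symm], fun i => ?_⟩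
  simp [sub_mul, ← ha]

namespace IsRF

theorem ne_of_pos (hA : IsRF n f A) (hij : 0 < A i j) : i ≠ j := by
  rintro rfl
  simp [hA.1] at hij

theorem add_sub_mem_NS (hA : IsRF n f A) (hij : 0 < A i j) : f + n i - n j ∈ NS n := by
  have hne := hA.ne_of_pos hij
  have hnonneg (k : Fin e) : 0 ≤ (A i + Pi.single i 1 : Fin e → ℤ) k := by
    obtain rfl | hki := eq_or_ne k i
    · simp [hA.1]
    · simpa [hki] using hA.2.1 i k hki.symm
  have := sum_mul_sub_mem_NS (n := n) (j := j) hnonneg (by simpa [hne.symm] using hij)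
  simpa [add_mul, sum_add_distrib, Pi.single_apply, hA.2.2] using this

theorem not_pos_of_pos (hA : IsRF n f A) (hB : IsRF n g B) (hfg : f + g ∉ NS n)
    (hij : 0 < A i j) : ¬ 0 < B j i := by
  refine fun hji => hfg ?_
  convert add_mem_NS (hA.add_sub_mem_NS hij) (hB.add_sub_mem_NS hji) using 1
  ring

theorem exists_pos (hA : IsRF n f A) (hf : 0 < f) (i : Fin e) : ∃ j, 0 < A i j := by
  by_contra! hle
  refine hf.not_ge ?_
  rw [← hA.2.2 i]
  exact sum_nonpos fun j _ => mul_nonpos_of_nonpos_of_nonneg (hle j) (Int.natCast_nonneg _)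

theorem mem_Gamma (hA : IsRF n f A) (hf : f ∈ PF n) (hij : i ≠ j)
    (hzero : ∀ k, k ≠ i → k ≠ j → A i k = 0) : (i, j) ∈ Gamma n f := by
  obtain ⟨K, hK⟩ := Int.eq_ofNat_of_zero_le (hA.2.1 i j hij)
  have hKf : (K : ℤ) * n j - n i = f := by
    rw [← hA.2.2 i, Fintype.sum_eq_add i j hij fun k hk => by simp [hzero k hk.1 hk.2], hA.1, hK]
    ring
  exact ⟨hij, K, isLam_of_mem_PF (hKf ▸ hf), hKf⟩

theorem card_posEntries_add_le (hA : IsRF n f A) (hB : IsRF n g B) (hfg : f + g ∉ NS n) :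
    #(posEntries A) + #(posEntries B) + e ≤ e ^ 2 := by
  have hdisj : Disjoint (posEntries A) ((posEntries B).map (Equiv.prodComm _ _).toEmbedding) := by
    simpa [disjoint_left, posEntries] using fun i j hij => not_lt.mp (hA.not_pos_of_pos hB hfg hij)
  have hsub : (posEntries A).disjUnion _ hdisj ⊆ univ.offDiag := by
    rintro ⟨i, j⟩ hp
    obtain hij | hji : 0 < A i j ∨ 0 < B j i := by simpa [posEntries] using hp
    · simpa using hA.ne_of_pos hij
    · simpa using (hB.ne_of_pos hji).symm
  have hcard := card_le_card hsub
  rw [card_disjUnion, card_map, offDiag_card, card_fin, ← sq] at hcard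
  have := Nat.le_self_pow two_ne_zero e
  omega

end IsRF

theorem two_mul_card_le_card_add_card {α β : Type*} [Fintype α] {s t : Finset (α × β)}
    (h : ∀ i, ∃ j, (i, j) ∈ s ∧ ((i, j) ∈ t ∨ ∃ k ≠ j, (i, k) ∈ s)) :
    2 * Fintype.card α ≤ #s + #t := by
  classical
  have hrow (i : α) : 2 ≤ #{p ∈ s | p.1 = i} + #{p ∈ t | p.1 = i} := by
    obtain ⟨j, hjs, hjt | ⟨k, hkj, hks⟩⟩ := h i
    · have hs : 0 < #{p ∈ s | p.1 = i} := card_pos.mpr ⟨(i, j), by simp [hjs]⟩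
      have ht : 0 < #{p ∈ t | p.1 = i} := card_pos.mpr ⟨(i, j), by simp [hjt]⟩
      omega
    · have hs : 1 < #{p ∈ s | p.1 = i} :=
        one_lt_card.mpr ⟨(i, k), by simp [hks], (i, j), by simp [hjs], by simp [hkj]⟩
      omega
  calc 2 * Fintype.card α = ∑ _i : α, 2 := by simp [mul_comm]
    _ ≤ ∑ i, (#{p ∈ s | p.1 = i} + #{p ∈ t | p.1 = i}) := sum_le_sum fun i _ => hrow i
    _ = #s + #t := by
      rw [sum_add_distrib,
        card_eq_sum_card_fiberwise (s := s) (t := univ) (f := Prod.fst) (by simp),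
        card_eq_sum_card_fiberwise (s := t) (t := univ) (f := Prod.fst) (by simp)]

theorem IsRF.two_mul_le_card_posEntries_add_ncard_Gamma (hA : IsRF n f A) (hf : f ∈ PF n)
    (hf₀ : 0 < f) : 2 * e ≤ #(posEntries A) + (Gamma n f).ncard := by
  classical
  rw [Set.ncard_eq_toFinset_card']
  suffices hrow : ∀ i, ∃ j, (i, j) ∈ posEntries A ∧
      ((i, j) ∈ (Gamma n f).toFinset ∨ ∃ k ≠ j, (i, k) ∈ posEntries A) by
    simpa only [Fintype.card_fin] using two_mul_card_le_card_add_card hrow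
  intro i
  obtain ⟨j, hij⟩ := hA.exists_pos hf₀ i
  refine ⟨j, by simpa [posEntries] using hij, ?_⟩
  by_cases hk : ∃ k ≠ j, 0 < A i k
  · exact .inr (by simpa [posEntries] using hk)
  · push Not at hk
    exact .inl <| Set.mem_toFinset.mpr <| hA.mem_Gamma hf (hA.ne_of_pos hij) fun k hki hkj =>
      (hk k hkj).antisymm (hA.2.1 i k hki.symm)

end

theorem stmt18_general {e : ℕ} {n : Fin e → ℕ} {f g : ℤ} (hf : f ∈ PF n) (hg : g ∈ PF n)
    (hfg : f + g ∉ NS n) (hf₀ : 0 < f) (hg₀ : 0 < g) :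
    5 * e ≤ e ^ 2 + ((Gamma n f).ncard + (Gamma n g).ncard) := by
  obtain ⟨A, hA⟩ := exists_isRF hf
  obtain ⟨B, hB⟩ := exists_isRF hg
  have hAΓ := hA.two_mul_le_card_posEntries_add_ncard_Gamma hf hf₀
  have hBΓ := hB.two_mul_le_card_posEntries_add_ncard_Gamma hg hg₀
  have hAB := hA.card_posEntries_add_le hB hfg
  omega

theorem stmt18 (n : Fin 4 → ℕ)
    (hpos : ∀ i, 0 < n i)
    (hgcd : Finset.univ.gcd n = 1)
    (hmin : MinGen n)
    (F : ℤ) (hF : IsFrob n F) (hAS : AlmostSym n F)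
    (f : ℤ) (hf : f ∈ PF n) (hfF : f ≠ F) :
    4 ≤ (Gam n f).ncard + (Gam n (F - f)).ncard := by
  have key : 5 * 4 ≤ 4 ^ 2 + ((Gam n f).ncard + (Gam n (F - f)).ncard) :=
    have hg := hAS.sub_mem_PF hF hf hfF
    stmt18_general hf hg (by simpa using hF.1) (hF.pos hf.1 hg.1)
      (hF.pos hg.1 (by simpa using hf.1))
  omega
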